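/- For k = 5 and every input list L, First Fit with cardinality constraint k satisfies FF(L) ≤ (32/15)·OPT(L) + 4. Consequently, the asymptotic competitive ratio of First Fit for k = 5 is at most 32/15. -/

import Mathlib

/-!
The proof is a weighting argument.  An item of size `x` gets weight `1/5 + g x`, where `g` is `bonus`.

*Upper side.*  At most five items of total size at most `1` have total `bonus` at most `17/15`
(`sum_bonus_le`), so every bin of an optimal packing has weight at most `1 + 17/15 = 32/15`.
An item larger than `1/2` has bonus `4/5`, and the rest, of total size below `1/2`, has bonus at
most `1/3`: the value of `g` on `(1/4, 1/2]` is chosen as `1/3 - u (1/2 - x)`, where `u = g` on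
`[0, 1/4]` is superadditive there.

*Lower side.*  First Fit bins of five items have weight at least `1`.  If `B` is a final bin with
fewer than five items, then every item `x` of a later bin did not fit by size, so
`x > 1 - size B` (`FFInv`).  Let `M` be the smallest size of a non-full bin met so far; all items
of the next bin `C` exceed `1 - M`.  The weight of `C` may be below `1`, but the deficit is always
paid for by the decrease of the potential `Φ M` (`potential`) when `M` is replaced by `min M (size C)`
(`one_le_weight_add`).  As `Φ 1 - Φ 0 ≤ 12/5`, the number of First Fit bins is at most the total
weight plus `12/5 ≤ 4`.
-/

open scoped Classical
noncomputable section

/-- An input is a list of item sizes, each in (0,1]. -/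
def ValidInput (L : List ℝ) : Prop := ∀ x ∈ L, 0 < x ∧ x ≤ 1

/-- A packing assigns a bin index to each item; it is feasible for cardinality
constraint `k` if every bin receives at most `k` items of total size at most 1. -/
def IsFeasible (k : ℕ) (L : List ℝ) (f : Fin L.length → ℕ) : Prop :=
  ∀ b : ℕ,
    (Finset.univ.filter (fun i => f i = b)).card ≤ k ∧
    ∑ i ∈ Finset.univ.filter (fun i => f i = b), L.get i ≤ 1

/-- The number of bins used by a packing. -/
def binsUsed (L : List ℝ) (f : Fin L.length → ℕ) : ℕ :=
  (Finset.univ.image f).card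

/-- The optimal (minimum) number of bins in a feasible packing of `L`. -/
def OPT (k : ℕ) (L : List ℝ) : ℕ :=
  sInf {n | ∃ f : Fin L.length → ℕ, IsFeasible k L f ∧ binsUsed L f = n}

/-- A deterministic online algorithm is a strategy: given the items seen so far
(ending with the item to be packed), it returns the bin index for that item. -/
def onlinePacking (A : List ℝ → ℕ) (L : List ℝ) : Fin L.length → ℕ :=
  fun i => A (L.take (i.1 + 1))

/-- The strategy `A` is a valid online algorithm for cardinality constraint `k`
if on every valid input the induced packing is feasible. -/
def OnlineValid (k : ℕ) (A : List ℝ → ℕ) : Prop :=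
  ∀ L : List ℝ, ValidInput L → IsFeasible k L (onlinePacking A L)

/-- The number of bins used by online algorithm `A` on input `L`. -/
def onlineBins (A : List ℝ → ℕ) (L : List ℝ) : ℕ :=
  binsUsed L (onlinePacking A L)

/-- The state of First Fit: a list of open bins (in order of opening),
each recorded as (number of items, total size). `ffFind` returns the index of
the first bin that can receive an item of size `x` (it has at most `k-1` items
and the item fits); if none, the index of a new bin. -/
def ffFind (k : ℕ) (x : ℝ) : List (ℕ × ℝ) → ℕ
  | [] => 0
  | b :: bs => if b.1 < k ∧ b.2 + x ≤ 1 then 0 else ffFind k x bs + 1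

/-- Update the First Fit state after packing an item of size `x`. -/
def ffUpdate (k : ℕ) (x : ℝ) : List (ℕ × ℝ) → List (ℕ × ℝ)
  | [] => [(1, x)]
  | b :: bs =>
      if b.1 < k ∧ b.2 + x ≤ 1 then (b.1 + 1, b.2 + x) :: bs
      else b :: ffUpdate k x bs

/-- The final state of First Fit with cardinality constraint `k` on input `L`. -/
def ffState (k : ℕ) (L : List ℝ) : List (ℕ × ℝ) :=
  L.foldl (fun bs x => ffUpdate k x bs) []

/-- The number of bins used by First Fit with cardinality constraint `k` on `L`. -/
def FF (k : ℕ) (L : List ℝ) : ℕ := (ffState k L).length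

/-- The bin index into which First Fit packs the `i`-th item of `L`. -/
def ffAssign (k : ℕ) (L : List ℝ) (i : Fin L.length) : ℕ :=
  ffFind k (L.get i) (ffState k (L.take i.1))

/-! ### The weight function -/

/-- The bonus of an item of size at most `1/4`: linear of slope `8/15` between `5/48` and `11/48`,
constant `0` below and `1/15` above. -/
def smallBonus (x : ℝ) : ℝ := max 0 (min (1 / 15) (8 / 15 * (x - 5 / 48)))

/-- The bonus of an item of size `x`; its weight is `1/5 + bonus x`. -/
def bonus (x : ℝ) : ℝ :=
  if 1 / 2 < x then 4 / 5 else if 1 / 4 < x then 1 / 3 - smallBonus (1 / 2 - x) else smallBonus x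

lemma smallBonus_nonneg (x : ℝ) : 0 ≤ smallBonus x := le_max_left _ _

lemma smallBonus_le (x : ℝ) : smallBonus x ≤ 1 / 15 :=
  max_le (by norm_num) (min_le_left _ _)

/-- The lower estimate of `smallBonus`, piece by piece. -/
lemma smallBonus_lower (x : ℝ) :
    1 / 15 ≤ smallBonus x ∨ 8 / 15 * (x - 5 / 48) ≤ smallBonus x := by
  unfold smallBonus
  rcases le_total (1 / 15) (8 / 15 * (x - 5 / 48)) with h | h
  · left; rw [min_eq_left h]; exact le_max_right _ _
  · right; rw [min_eq_right h]; exact le_max_right _ _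

/-- The upper estimate of `smallBonus`, piece by piece. -/
lemma smallBonus_upper (x : ℝ) :
    smallBonus x ≤ 0 ∨ (smallBonus x ≤ 8 / 15 * (x - 5 / 48) ∧ 5 / 48 ≤ x) := by
  unfold smallBonus
  rcases le_total x (5 / 48) with h | h
  · left
    exact max_le le_rfl ((min_le_right _ _).trans (by linarith))
  · right
    exact ⟨max_le (by linarith) (min_le_right _ _), h⟩

lemma bonus_big {x : ℝ} (h : 1 / 2 < x) : bonus x = 4 / 5 := by
  simp only [bonus, if_pos h]

lemma bonus_mid {x : ℝ} (h : 1 / 4 < x) (h' : x ≤ 1 / 2) :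
    bonus x = 1 / 3 - smallBonus (1 / 2 - x) := by
  simp only [bonus, if_neg (not_lt.mpr h'), if_pos h]

lemma bonus_small {x : ℝ} (h : x ≤ 1 / 4) : bonus x = smallBonus x := by
  have h' : ¬ 1 / 2 < x := by linarith
  simp only [bonus, if_neg h', if_neg (not_lt.mpr h)]

lemma bonus_large_ge {x : ℝ} (h : 1 / 4 < x) : 4 / 15 ≤ bonus x := by
  rcases le_or_gt x (1 / 2) with h' | h'
  · rw [bonus_mid h h']; linarith [smallBonus_le (1 / 2 - x)]
  · rw [bonus_big h']; norm_num

lemma bonus_nonneg (x : ℝ) : 0 ≤ bonus x := by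
  rcases le_or_gt x (1 / 4) with h | h
  · rw [bonus_small h]; exact smallBonus_nonneg x
  · linarith [bonus_large_ge h]

/-! ### Weight of a feasible bin -/

lemma smallBonus_superadd {x y : ℝ} (hx : 0 ≤ x) (hy : 0 ≤ y) (h : x + y ≤ 1 / 4) :
    smallBonus x + smallBonus y ≤ smallBonus (x + y) := by
  have := smallBonus_nonneg (x + y)
  have := smallBonus_le x
  have := smallBonus_le y
  rcases smallBonus_upper x with h1 | h1 <;> rcases smallBonus_upper y with h2 | h2 <;>
    rcases smallBonus_lower (x + y) with h3 | h3 <;> linarith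

lemma sum_smallBonus_le {ι : Type*} (U : Finset ι) (x : ι → ℝ) (hpos : ∀ i ∈ U, 0 ≤ x i)
    (hs : ∑ i ∈ U, x i ≤ 1 / 4) :
    ∑ i ∈ U, smallBonus (x i) ≤ smallBonus (∑ i ∈ U, x i) := by
  induction U using Finset.induction_on with
  | empty => simpa using smallBonus_nonneg 0
  | insert a s ha ih =>
    rw [Finset.sum_insert ha] at hs ⊢
    rw [Finset.sum_insert ha]
    have ha0 := hpos a (Finset.mem_insert_self a s)
    have hs0 : 0 ≤ ∑ i ∈ s, x i :=
      Finset.sum_nonneg fun i hi => hpos i (Finset.mem_insert_of_mem hi)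
    have := ih (fun i hi => hpos i (Finset.mem_insert_of_mem hi)) (by linarith)
    linarith [smallBonus_superadd ha0 hs0 hs]

lemma smallBonus_mono {x y : ℝ} (h : x ≤ y) : smallBonus x ≤ smallBonus y := by
  unfold smallBonus
  gcongr

/-- The items sharing a bin with an item larger than `1/2` have total bonus at most `1/3`. -/
lemma sum_bonus_half_le {ι : Type*} (T : Finset ι) (x : ι → ℝ) (hpos : ∀ i ∈ T, 0 < x i)
    (hcard : T.card ≤ 4) (hs : ∑ i ∈ T, x i < 1 / 2) : ∑ i ∈ T, bonus (x i) ≤ 1 / 3 := by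
  have hcard' : (T.card : ℝ) ≤ 4 := by exact_mod_cast hcard
  by_cases hj : ∃ j ∈ T, 1 / 4 < x j
  · obtain ⟨j, hjT, hj⟩ := hj
    rw [← Finset.add_sum_erase T _ hjT] at hs ⊢
    have hpos' : ∀ i ∈ T.erase j, 0 ≤ x i := fun i hi => (hpos i (Finset.mem_of_mem_erase hi)).le
    have h0 : 0 ≤ ∑ i ∈ T.erase j, x i := Finset.sum_nonneg hpos'
    have hsmall : ∀ i ∈ T.erase j, bonus (x i) = smallBonus (x i) := fun i hi =>
      bonus_small (by linarith [Finset.single_le_sum hpos' hi])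
    rw [Finset.sum_congr rfl hsmall, bonus_mid hj (by linarith)]
    have h1 := sum_smallBonus_le (T.erase j) x hpos' (by linarith)
    have h2 : smallBonus (∑ i ∈ T.erase j, x i) ≤ smallBonus (1 / 2 - x j) :=
      smallBonus_mono (by linarith)
    linarith
  · push Not at hj
    have h1 : ∑ i ∈ T, bonus (x i) ≤ T.card • (1 / 15 : ℝ) :=
      Finset.sum_le_card_nsmul _ _ _ fun i hi => by
        rw [bonus_small (hj i hi)]; exact smallBonus_le _
    rw [nsmul_eq_mul] at h1
    linarith

lemma sum_bonus_le {ι : Type*} (S : Finset ι) (x : ι → ℝ) (hpos : ∀ i ∈ S, 0 < x i)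
    (hcard : S.card ≤ 5) (hs : ∑ i ∈ S, x i ≤ 1) : ∑ i ∈ S, bonus (x i) ≤ 17 / 15 := by
  have hcard' : (S.card : ℝ) ≤ 5 := by exact_mod_cast hcard
  by_cases hi : ∃ i ∈ S, 1 / 2 < x i
  · obtain ⟨i, hiS, hi⟩ := hi
    rw [← Finset.add_sum_erase S _ hiS] at hs ⊢
    have := sum_bonus_half_le (S.erase i) x (fun j hj => hpos j (Finset.mem_of_mem_erase hj))
      (by rw [Finset.card_erase_of_mem hiS]; omega) (by linarith)
    rw [bonus_big hi]
    linarith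
  · push Not at hi
    -- At most three items exceed `1/4`; each has bonus at most `1/3`, the others at most `1/15`.
    have h1 : ∑ i ∈ S, bonus (x i) ≤ ∑ i ∈ S, (1 / 15 + if 1 / 4 < x i then 4 / 15 else 0) := by
      refine Finset.sum_le_sum fun i hiS => ?_
      split_ifs with h
      · rw [bonus_mid h (hi i hiS)]; linarith [smallBonus_nonneg (1 / 2 - x i)]
      · rw [bonus_small (not_lt.mp h)]; linarith [smallBonus_le (x i)]
    rw [Finset.sum_add_distrib, ← Finset.sum_filter, Finset.sum_const, Finset.sum_const,
      nsmul_eq_mul, nsmul_eq_mul] at h1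
    have h2 : (S.filter fun i => 1 / 4 < x i).card ≤ 3 := by
      by_contra! h4
      have hne : (S.filter fun i => 1 / 4 < x i).Nonempty := by
        rw [← Finset.card_pos]; omega
      have h5 : ∑ i ∈ S.filter (fun i => 1 / 4 < x i), (1 / 4 : ℝ)
          < ∑ i ∈ S.filter (fun i => 1 / 4 < x i), x i :=
        Finset.sum_lt_sum_of_nonempty hne fun i hi => (Finset.mem_filter.mp hi).2
      have h6 : ∑ i ∈ S.filter (fun i => 1 / 4 < x i), x i ≤ ∑ i ∈ S, x i :=
        Finset.sum_le_sum_of_subset_of_nonneg (Finset.filter_subset _ _)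
          fun i hi _ => (hpos i hi).le
      rw [Finset.sum_const, nsmul_eq_mul] at h5
      have h7 : (4 : ℝ) ≤ ((S.filter fun i => 1 / 4 < x i).card : ℝ) := by exact_mod_cast h4
      linarith
    have h3 : ((S.filter fun i => 1 / 4 < x i).card : ℝ) ≤ 3 := by exact_mod_cast h2
    linarith

/-! ### Weight of a First Fit bin with fewer than five items -/

/-- The potential of the minimum `M` of the sizes of the non-full bins met so far. The jumps pay
for the at most one bin of size at most `3/4` with an item of size at most `1/4`, and for the at
most one bin consisting of a single item of size at most `1/2`. -/
def potential (M : ℝ) : ℝ :=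
  M + (if 3 / 4 < M then 3 / 5 else 0) + (if 1 / 2 < M then 4 / 5 else 0)

lemma potential_diff (M M' : ℝ) (h : M' ≤ M) : M - M' ≤ potential M - potential M' := by
  unfold potential
  split_ifs <;> linarith

lemma potential_jump_one {M M' : ℝ} (h : M' ≤ 1 / 2) (hM : 1 / 2 < M) :
    4 / 5 ≤ potential M - potential M' := by
  unfold potential
  split_ifs <;> linarith

lemma potential_jump_two {M M' : ℝ} (h : M' ≤ 3 / 4) (hM : 3 / 4 < M) :
    3 / 5 ≤ potential M - potential M' := by
  unfold potential
  split_ifs <;> linarith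

lemma bonus_one {M a : ℝ} (ha : 1 - M < a) :
    4 / 5 ≤ bonus a + (potential M - potential (min M a)) := by
  rcases le_or_gt a (1 / 2) with h | h
  · have := potential_jump_one (M := M) ((min_le_right M a).trans h) (by linarith)
    linarith [bonus_nonneg a]
  · have := potential_diff M (min M a) (min_le_left _ _)
    rw [bonus_big h]
    linarith [min_le_left M a]

lemma bonus_two {M a b : ℝ} (ha : 1 - M < a) (hb : 1 - M < b) :
    3 / 5 ≤ bonus a + bonus b + (potential M - potential (min M (a + b))) := by
  have hd := potential_diff M (min M (a + b)) (min_le_left _ _)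
  have hm1 := min_le_left M (a + b)
  have hm2 := min_le_right M (a + b)
  have hA := bonus_nonneg a
  have hB := bonus_nonneg b
  rcases lt_or_ge (1 / 2) a with h | ha2
  · rw [bonus_big h]; linarith
  rcases lt_or_ge (1 / 2) b with h | hb2
  · rw [bonus_big h]; linarith
  rcases le_or_gt a (1 / 4) with h | ha4
  · have := potential_jump_two (M := M) (M' := min M (a + b)) (by linarith) (by linarith)
    linarith
  rcases le_or_gt b (1 / 4) with h | hb4
  · have := potential_jump_two (M := M) (M' := min M (a + b)) (by linarith) (by linarith)
    linarith
  rw [bonus_mid ha4 ha2, bonus_mid hb4 hb2]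
  have hu1 := smallBonus_le (1 / 2 - a)
  have hu2 := smallBonus_le (1 / 2 - b)
  rcases smallBonus_upper (1 / 2 - a) with h1 | ⟨h1, h1'⟩ <;>
    rcases smallBonus_upper (1 / 2 - b) with h2 | ⟨h2, h2'⟩ <;> linarith

/-- Three items of which exactly the first exceeds `1/4`. -/
lemma bonus_three_aux {M a b c : ℝ} (ha : 1 / 4 < a) (ha2 : a ≤ 1 / 2)
    (hb : 1 - M < b) (hc : 1 - M < c) (hb4 : b ≤ 1 / 4) (hc4 : c ≤ 1 / 4) :
    2 / 5 ≤ bonus a + bonus b + bonus c + (M - min M (a + b + c)) := by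
  have hm1 := min_le_left M (a + b + c)
  have hm2 := min_le_right M (a + b + c)
  rw [bonus_mid ha ha2, bonus_small hb4, bonus_small hc4]
  have h0 := smallBonus_le (1 / 2 - a)
  have hb0 := smallBonus_nonneg b
  have hc0 := smallBonus_nonneg c
  rcases smallBonus_upper (1 / 2 - a) with h1 | ⟨h1, h1'⟩ <;>
    rcases smallBonus_lower b with h2 | h2 <;>
    rcases smallBonus_lower c with h3 | h3 <;> linarith

lemma bonus_three {M a b c : ℝ} (ha : 1 - M < a) (hb : 1 - M < b) (hc : 1 - M < c) :
    2 / 5 ≤ bonus a + bonus b + bonus c + (potential M - potential (min M (a + b + c))) := by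
  have hd := potential_diff M (min M (a + b + c)) (min_le_left _ _)
  have hm1 := min_le_left M (a + b + c)
  have hm2 := min_le_right M (a + b + c)
  have hA := bonus_nonneg a
  have hB := bonus_nonneg b
  have hC := bonus_nonneg c
  rcases lt_or_ge (1 / 2) a with h | ha2
  · rw [bonus_big h]; linarith
  rcases lt_or_ge (1 / 2) b with h | hb2
  · rw [bonus_big h]; linarith
  rcases lt_or_ge (1 / 2) c with h | hc2
  · rw [bonus_big h]; linarith
  rcases le_or_gt a (1 / 4) with ha4 | ha4 <;> rcases le_or_gt b (1 / 4) with hb4 | hb4 <;>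
    rcases le_or_gt c (1 / 4) with hc4 | hc4
  · have := potential_jump_two (M := M) (M' := min M (a + b + c)) (by linarith) (by linarith)
    linarith
  · have := bonus_three_aux hc4 hc2 ha hb ha4 hb4
    rw [show c + a + b = a + b + c by ring] at this
    linarith
  · have := bonus_three_aux hb4 hb2 ha hc ha4 hc4
    rw [show b + a + c = a + b + c by ring] at this
    linarith
  · linarith [bonus_large_ge hb4, bonus_large_ge hc4]
  · linarith [bonus_three_aux ha4 ha2 hb hc hb4 hc4]
  · linarith [bonus_large_ge ha4, bonus_large_ge hc4]
  · linarith [bonus_large_ge ha4, bonus_large_ge hb4]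
  · linarith [bonus_large_ge ha4, bonus_large_ge hb4]

lemma bonus_four {M a b c d : ℝ} (ha : 1 - M < a) (hb : 1 - M < b) (hc : 1 - M < c)
    (hd : 1 - M < d) :
    1 / 5 ≤ bonus a + bonus b + bonus c + bonus d +
      (potential M - potential (min M (a + b + c + d))) := by
  have hp := potential_diff M (min M (a + b + c + d)) (min_le_left _ _)
  have hm1 := min_le_left M (a + b + c + d)
  have hm2 := min_le_right M (a + b + c + d)
  have hA := bonus_nonneg a
  have hB := bonus_nonneg b
  have hC := bonus_nonneg c
  have hD := bonus_nonneg d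
  rcases lt_or_ge (1 / 4) a with h | ha4
  · linarith [bonus_large_ge h]
  rcases lt_or_ge (1 / 4) b with h | hb4
  · linarith [bonus_large_ge h]
  rcases lt_or_ge (1 / 4) c with h | hc4
  · linarith [bonus_large_ge h]
  rcases lt_or_ge (1 / 4) d with h | hd4
  · linarith [bonus_large_ge h]
  rw [bonus_small ha4] at hA ⊢
  rw [bonus_small hb4] at hB ⊢
  rw [bonus_small hc4] at hC ⊢
  rw [bonus_small hd4] at hD ⊢
  rcases smallBonus_lower a with h1 | h1 <;> rcases smallBonus_lower b with h2 | h2 <;>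
    rcases smallBonus_lower c with h3 | h3 <;> rcases smallBonus_lower d with h4 | h4 <;> linarith

/-- The total weight of a list of items. -/
def weight (C : List ℝ) : ℝ := (C.map fun x => 1 / 5 + bonus x).sum

/-- A bin whose items all exceed `1 - M` has weight at least `1`, up to the decrease of the
potential. -/
lemma one_le_weight_add {M : ℝ} {C : List ℝ} (hne : C ≠ []) (hlen : C.length < 5)
    (hC : ∀ x ∈ C, 1 - M < x) :
    1 ≤ weight C + (potential M - potential (min M C.sum)) := by
  match C, hne, hlen, hC with
  | [a], _, _, hC =>
    have := bonus_one (hC a (by simp))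
    simp only [weight, List.map_cons, List.map_nil, List.sum_cons, List.sum_nil, add_zero]
    linarith
  | [a, b], _, _, hC =>
    have := bonus_two (hC a (by simp)) (hC b (by simp))
    simp only [weight, List.map_cons, List.map_nil, List.sum_cons, List.sum_nil, add_zero]
    linarith
  | [a, b, c], _, _, hC =>
    have := bonus_three (hC a (by simp)) (hC b (by simp)) (hC c (by simp))
    simp only [weight, List.map_cons, List.map_nil, List.sum_cons, List.sum_nil, add_zero,
      ← add_assoc] at this ⊢
    linarith
  | [a, b, c, d], _, _, hC =>
    have := bonus_four (hC a (by simp)) (hC b (by simp)) (hC c (by simp)) (hC d (by simp))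
    simp only [weight, List.map_cons, List.map_nil, List.sum_cons, List.sum_nil, add_zero,
      ← add_assoc] at this ⊢
    linarith
  | _ :: _ :: _ :: _ :: _ :: _, _, hlen, _ => simp at hlen; omega

lemma card_div_five_le_weight (C : List ℝ) : (C.length : ℝ) / 5 ≤ weight C := by
  induction C with
  | nil => simp [weight]
  | cons a C ih =>
    simp only [weight, List.map_cons, List.sum_cons, List.length_cons, Nat.cast_add,
      Nat.cast_one] at ih ⊢
    linarith [bonus_nonneg a]

/-! ### First Fit with explicit bin contents -/

/-- `ffUpdate 5` on states that record the items of each bin. -/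
def ffStep (x : ℝ) : List (List ℝ) → List (List ℝ)
  | [] => [[x]]
  | b :: bs => if b.length < 5 ∧ b.sum + x ≤ 1 then (x :: b) :: bs else b :: ffStep x bs

/-- The item count and total size of a bin, as recorded by `ffState`. -/
def summary (b : List ℝ) : ℕ × ℝ := (b.length, b.sum)

lemma ffStep_summary (x : ℝ) (bs : List (List ℝ)) :
    (ffStep x bs).map summary = ffUpdate 5 x (bs.map summary) := by
  induction bs with
  | nil => simp [ffStep, ffUpdate, summary]
  | cons b bs ih =>
    by_cases h : b.length < 5 ∧ b.sum + x ≤ 1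
    · have h' : (summary b).1 < 5 ∧ (summary b).2 + x ≤ 1 := h
      simp only [ffStep, if_pos h, List.map_cons, ffUpdate, if_pos h']
      simp [summary, add_comm]
    · have h' : ¬ ((summary b).1 < 5 ∧ (summary b).2 + x ≤ 1) := h
      simp only [ffStep, if_neg h, List.map_cons, ffUpdate, if_neg h', ih]

/-- The relation between an earlier bin `B` and a later bin `C` in a First Fit packing: if `B` is
not full, then no item of `C` fits into `B`. -/
def Blocks (B C : List ℝ) : Prop := B.length < 5 → ∀ x ∈ C, 1 < B.sum + x

/-- The invariant of First Fit states: earlier bins block later ones, and each bin holds between one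
and five items, all of positive size. -/
def FFInv (bs : List (List ℝ)) : Prop :=
  bs.Pairwise Blocks ∧ ∀ b ∈ bs, b ≠ [] ∧ b.length ≤ 5 ∧ ∀ x ∈ b, 0 < x

lemma mem_ffStep {x : ℝ} {bs : List (List ℝ)} {C : List ℝ} (hC : C ∈ ffStep x bs) :
    C ∈ bs ∨ C = [x] ∨ ∃ b ∈ bs, b.length < 5 ∧ C = x :: b := by
  induction bs with
  | nil => simp [ffStep] at hC; simp [hC]
  | cons b bs ih =>
    by_cases h : b.length < 5 ∧ b.sum + x ≤ 1
    · simp only [ffStep, if_pos h, List.mem_cons] at hC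
      rcases hC with rfl | hC
      · exact .inr (.inr ⟨b, by simp, h.1, rfl⟩)
      · exact .inl (by simp [hC])
    · simp only [ffStep, if_neg h, List.mem_cons] at hC
      rcases hC with rfl | hC
      · exact .inl (by simp)
      · rcases ih hC with h1 | h1 | ⟨b', hb', h1⟩
        · exact .inl (by simp [h1])
        · exact .inr (.inl h1)
        · exact .inr (.inr ⟨b', by simp [hb'], h1⟩)

lemma ffStep_pairwise {x : ℝ} (hx : 0 < x) {bs : List (List ℝ)} (h : bs.Pairwise Blocks) :
    (ffStep x bs).Pairwise Blocks := by
  induction bs with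
  | nil => simp [ffStep]
  | cons b bs ih =>
    obtain ⟨hb, hbs⟩ := List.pairwise_cons.mp h
    by_cases hfit : b.length < 5 ∧ b.sum + x ≤ 1
    · simp only [ffStep, if_pos hfit]
      refine List.pairwise_cons.mpr ⟨fun C hC _ y hy => ?_, hbs⟩
      have := hb C hC hfit.1 y hy
      rw [List.sum_cons]
      linarith
    · simp only [ffStep, if_neg hfit]
      refine List.pairwise_cons.mpr ⟨fun C hC hlen y hy => ?_, ih hbs⟩
      have hxb : 1 < b.sum + x := not_le.mp fun hle => hfit ⟨hlen, hle⟩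
      rcases mem_ffStep hC with h1 | rfl | ⟨b', hb', -, rfl⟩
      · exact hb C h1 hlen y hy
      · rw [List.mem_singleton.mp hy]; exact hxb
      · rcases List.mem_cons.mp hy with rfl | hy
        · exact hxb
        · exact hb b' hb' hlen y hy

lemma ffStep_inv {x : ℝ} (hx : 0 < x) {bs : List (List ℝ)} (h : FFInv bs) :
    FFInv (ffStep x bs) := by
  refine ⟨ffStep_pairwise hx h.1, fun C hC => ?_⟩
  rcases mem_ffStep hC with h1 | rfl | ⟨b, hb, hlen, rfl⟩
  · exact h.2 C h1
  · simpa using hx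
  · refine ⟨by simp, by simp; omega, fun y hy => ?_⟩
    rcases List.mem_cons.mp hy with rfl | hy
    · exact hx
    · exact (h.2 b hb).2.2 y hy

/-- The total weight of all bins of a state. -/
def totalWeight (bs : List (List ℝ)) : ℝ := (bs.map weight).sum

lemma ffStep_totalWeight (x : ℝ) (bs : List (List ℝ)) :
    totalWeight (ffStep x bs) = 1 / 5 + bonus x + totalWeight bs := by
  induction bs with
  | nil => simp [ffStep, totalWeight, weight]
  | cons b bs ih =>
    simp only [totalWeight] at ih ⊢
    by_cases h : b.length < 5 ∧ b.sum + x ≤ 1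
    · simp only [ffStep, if_pos h, weight, List.map_cons, List.sum_cons]
      ring
    · simp only [ffStep, if_neg h, List.map_cons, List.sum_cons, ih]
      ring

lemma exists_refined_state (L : List ℝ) (hL : ∀ x ∈ L, 0 < x) (bs : List (List ℝ))
    (hbs : FFInv bs) :
    ∃ bs' : List (List ℝ), FFInv bs' ∧
      bs'.map summary = L.foldl (fun s x => ffUpdate 5 x s) (bs.map summary) ∧
      totalWeight bs' = weight L + totalWeight bs := by
  induction L generalizing bs with
  | nil => exact ⟨bs, hbs, rfl, by simp [weight]⟩
  | cons x L ih =>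
    obtain ⟨bs', h1, h2, h3⟩ := ih (fun y hy => hL y (by simp [hy])) (ffStep x bs)
      (ffStep_inv (hL x (by simp)) hbs)
    refine ⟨bs', h1, ?_, ?_⟩
    · rw [h2, ffStep_summary, List.foldl_cons]
    · rw [h3, ffStep_totalWeight]
      simp only [weight, List.map_cons, List.sum_cons]
      ring

/-- The number of bins is at most the total weight plus the potential, by summing
`one_le_weight_add` along the list of bins; `M` is the running minimum of the sizes of the non-full
bins. -/
lemma length_le_totalWeight (bs : List (List ℝ)) (M : ℝ) (hinv : FFInv bs)
    (hM : ∀ b ∈ bs, ∀ x ∈ b, 1 - M < x) (hM0 : 0 ≤ M) :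
    (bs.length : ℝ) ≤ totalWeight bs + potential M := by
  induction bs generalizing M with
  | nil =>
    simp only [totalWeight, potential, List.length_nil, Nat.cast_zero, List.map_nil, List.sum_nil]
    split_ifs <;> linarith
  | cons b bs ih =>
    obtain ⟨hpw, hall⟩ := hinv
    obtain ⟨hb, hpw⟩ := List.pairwise_cons.mp hpw
    have hinv' : FFInv bs := ⟨hpw, fun C hC => hall C (by simp [hC])⟩
    obtain ⟨hne, hlen, hpos⟩ := hall b (by simp)
    simp only [totalWeight, List.length_cons, Nat.cast_add, Nat.cast_one, List.map_cons,
      List.sum_cons] at ih ⊢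
    rcases hlen.lt_or_eq with hlt | heq
    · have h1 := one_le_weight_add hne hlt (hM b (by simp))
      have hsum : 0 ≤ b.sum := List.sum_nonneg fun x hx => (hpos x hx).le
      have h2 := ih (min M b.sum) hinv' (fun C hC x hx => by
        have h3 := hM C (by simp [hC]) x hx
        have h5 := hb C hC hlt x hx
        rcases min_choice M b.sum with h | h <;> rw [h] <;> linarith) (le_min hM0 hsum)
      linarith
    · have h1 := card_div_five_le_weight b
      rw [heq] at h1
      have h2 := ih M hinv' (fun C hC => hM C (by simp [hC])) hM0
      norm_num at h1
      linarith

lemma FF_le_weight (L : List ℝ) (hL : ValidInput L) : (FF 5 L : ℝ) ≤ weight L + 12 / 5 := by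
  obtain ⟨bs, hinv, hmap, hw⟩ := exists_refined_state L (fun x hx => (hL x hx).1) []
    ⟨List.Pairwise.nil, by simp⟩
  have hlen : FF 5 L = bs.length := by
    rw [FF, ffState, ← List.length_map (as := bs) summary, hmap]; rfl
  have h := length_le_totalWeight bs 1 hinv
    (fun b hb x hx => by simpa using (hinv.2 b hb).2.2 x hx) zero_le_one
  have hpot : potential 1 = 12 / 5 := by norm_num [potential]
  have h0 : totalWeight [] = 0 := by simp [totalWeight]
  rw [hlen]
  linarith

/-! ### Optimal packings -/

lemma weight_le_binsUsed (L : List ℝ) (hL : ValidInput L) (f : Fin L.length → ℕ)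
    (hf : IsFeasible 5 L f) : weight L ≤ 32 / 15 * (binsUsed L f : ℝ) := by
  have h1 : weight L = ∑ i : Fin L.length, (1 / 5 + bonus (L.get i)) := by
    rw [weight, ← Fin.sum_univ_fun_getElem]; rfl
  rw [h1, ← Finset.sum_fiberwise_of_maps_to
    (t := Finset.univ.image f) (g := f) (fun i _ => Finset.mem_image_of_mem f (Finset.mem_univ i))]
  have h2 : ∀ b ∈ Finset.univ.image f,
      ∑ i ∈ Finset.univ.filter (fun i => f i = b), (1 / 5 + bonus (L.get i)) ≤ 32 / 15 := by
    intro b _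
    obtain ⟨hc, hs⟩ := hf b
    have h3 := sum_bonus_le _ L.get (fun i _ => (hL _ (List.get_mem L i)).1) hc hs
    have hc' : ((Finset.univ.filter (fun i => f i = b)).card : ℝ) ≤ 5 := by exact_mod_cast hc
    rw [Finset.sum_add_distrib, Finset.sum_const, nsmul_eq_mul]
    linarith
  have h4 := Finset.sum_le_card_nsmul _ _ _ h2
  rw [nsmul_eq_mul] at h4
  rw [binsUsed]
  linarith

/-- `OPT` is attained; the packing with one item per bin shows that feasible packings exist. -/
lemma exists_optimal (L : List ℝ) (hL : ValidInput L) :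
    ∃ f : Fin L.length → ℕ, IsFeasible 5 L f ∧ binsUsed L f = OPT 5 L := by
  refine Nat.sInf_mem (s := {n | ∃ f : Fin L.length → ℕ, IsFeasible 5 L f ∧ binsUsed L f = n})
    ⟨_, fun i => i.1, fun b => ?_, rfl⟩
  have hcard : (Finset.univ.filter (fun i : Fin L.length => i.1 = b)).card ≤ 1 :=
    Finset.card_le_one.mpr fun i hi j hj => Fin.ext <| by
      rw [(Finset.mem_filter.mp hi).2, (Finset.mem_filter.mp hj).2]
  have hcard' : ((Finset.univ.filter (fun i : Fin L.length => i.1 = b)).card : ℝ) ≤ 1 := by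
    exact_mod_cast hcard
  refine ⟨hcard.trans (by norm_num), ?_⟩
  have h := Finset.sum_le_card_nsmul (Finset.univ.filter (fun i : Fin L.length => i.1 = b)) L.get 1
    fun i _ => (hL _ (List.get_mem L i)).2
  rw [nsmul_eq_mul, mul_one] at h
  linarith

/-- For k = 5 and every input `L`, FF(L) ≤ (32/15)·OPT(L) + 4: the
asymptotic competitive ratio of First Fit for k = 5 is at most 32/15. -/
theorem ff_k5_ub (L : List ℝ) (hL : ValidInput L) :
    (FF 5 L : ℝ) ≤ (32 / 15 : ℝ) * (OPT 5 L : ℝ) + 4 := by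
  obtain ⟨f, hf, hopt⟩ := exists_optimal L hL
  have h1 := FF_le_weight L hL
  have h2 := weight_le_binsUsed L hL f hf
  rw [hopt] at h2
  linarith
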